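/- Let h ≥ 2 be an integer and e : ℕ → ℤ any function with ∑_{d | h} e(d) = 0. Define m(k) := ∑_{d | gcd(k, h)} e(h/d) for 1 ≤ k ≤ h−1, set n := ∑_{d | h} d·e(d), and let B(q) := ∑_{k=1}^{h−1} m(k) · ∑_{j=0}^{k−1} q^j. Then the polynomial identity (1 − q) · B(q) = n − ∑_{d | h} e(h/d) · ∑_{j=0}^{h/d − 1} q^{jd} holds in ℤ[q]. -/

import Mathlib

open Polynomial

theorem aux_sum (h d : ℕ) (hd : d ∣ h) (hpos : 0 < d) (f : ℕ → Polynomial ℤ) :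
    ∑ k ∈ Finset.range h, (if d ∣ k then f k else 0) =
      ∑ j ∈ Finset.range (h / d), f (j * d) := by
  rw [← Finset.sum_filter]
  obtain ⟨c, rfl⟩ := hd
  rw [Nat.mul_div_cancel_left c hpos]
  refine Finset.sum_nbij' (fun k => k / d) (fun j => j * d) ?_ ?_ ?_ ?_ ?_
  · intro k hk
    simp only [Finset.mem_filter, Finset.mem_range] at hk ⊢
    exact Nat.div_lt_of_lt_mul hk.1
  · intro j hj
    simp only [Finset.mem_filter, Finset.mem_range] at hj ⊢
    refine ⟨?_, Dvd.intro_left j rfl⟩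
    rw [mul_comm d c]
    exact Nat.mul_lt_mul_of_pos_right hj hpos
  · intro k hk
    exact Nat.div_mul_cancel (Finset.mem_filter.1 hk).2
  · intro j _
    exact Nat.mul_div_cancel j hpos
  · intro k hk
    simp only [Nat.div_mul_cancel (Finset.mem_filter.1 hk).2]

/-- Let `h ≥ 2` and `e : ℕ → ℤ` with `∑_{d ∣ h} e(d) = 0`. With
`m(k) := ∑_{d ∣ gcd(k,h)} e(h/d)`, `n := ∑_{d ∣ h} d·e(d)` and
`B(q) := ∑_{k=1}^{h−1} m(k) (1 + q + ⋯ + q^{k−1})`, the identity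
`(1 − q) B(q) = n − ∑_{d ∣ h} e(h/d) ∑_{j<h/d} q^{jd}` holds in `ℤ[q]`. -/
theorem stmt_14 (h : ℕ) (hh : 2 ≤ h) (e : ℕ → ℤ)
    (he : ∑ d ∈ h.divisors, e d = 0)
    (m : ℕ → ℤ) (hm : ∀ k : ℕ, m k = ∑ d ∈ (Nat.gcd k h).divisors, e (h / d))
    (n : ℤ) (hn : n = ∑ d ∈ h.divisors, (d : ℤ) * e d)
    (B : Polynomial ℤ)
    (hB : B = ∑ k ∈ Finset.Icc 1 (h - 1), C (m k) * ∑ j ∈ Finset.range k, X ^ j) :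
    (1 - X) * B =
      C n - ∑ d ∈ h.divisors, C (e (h / d)) *
        ∑ j ∈ Finset.range (h / d), (X : Polynomial ℤ) ^ (j * d) := by
  have h0 : h ≠ 0 := by omega
  have h1 : (1 - X) * B = ∑ k ∈ Finset.range h, C (m k) * (1 - (X : Polynomial ℤ) ^ k) := by
    obtain ⟨g, rfl⟩ : ∃ g, h = g + 1 := ⟨h - 1, by omega⟩
    rw [hB, Finset.mul_sum, Finset.range_eq_Ico, Finset.sum_eq_sum_Ico_succ_bot (by omega)]
    simp only [pow_zero, sub_self, mul_zero, zero_add]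
    refine Finset.sum_congr ?_ ?_
    · ext k
      simp only [Finset.mem_Icc, Finset.mem_Ico]
      omega
    · intro k _
      rw [← mul_neg_geom_sum (X : Polynomial ℤ) k]
      ring
  have h2 : ∀ k, C (m k) * (1 - (X : Polynomial ℤ) ^ k) = ∑ d ∈ h.divisors,
      if d ∣ k then C (e (h / d)) * (1 - (X : Polynomial ℤ) ^ k) else 0 := by
    intro k
    rw [← Finset.sum_filter, ← Finset.sum_mul, hm, map_sum]
    congr 1
    refine Finset.sum_congr ?_ (fun _ _ => rfl)
    ext d
    simp [Nat.mem_divisors, Nat.dvd_gcd_iff, h0]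
    tauto
  rw [h1, Finset.sum_congr rfl (fun k _ => h2 k), Finset.sum_comm, hn,
    ← Nat.sum_div_divisors h (fun d => (d : ℤ) * e d), map_sum, ← Finset.sum_sub_distrib]
  refine Finset.sum_congr rfl ?_
  intro d hd
  rw [aux_sum h d (Nat.dvd_of_mem_divisors hd) (Nat.pos_of_mem_divisors hd)
    (fun k => C (e (h / d)) * (1 - (X : Polynomial ℤ) ^ k)), ← Finset.mul_sum,
    Finset.sum_sub_distrib, mul_sub, C_mul]
  congr 1
  rw [mul_comm]
  rw [Finset.sum_const, Finset.card_range, nsmul_one]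
  congr 1
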